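/- Asymptotic intersection method, part (1): Let (Ω, 𝓐, P) be a probability space, let L_{1,n}, U_{1,n}, L_{2,n}, U_{2,n} (n ∈ ℕ) be sequences of real random variables, let θ₁, θ₂ be real numbers, and let α₁, α₂, α ∈ [0,1] with α₁ + α₂ ≤ α. If liminf_{n→∞} P({ω : L_{k,n}(ω) ≤ θ_k ≤ U_{k,n}(ω)}) ≥ 1 − α_k for k = 1, 2, then liminf_{n→∞} P({ω : L_{1,n}(ω) − U_{2,n}(ω) ≤ θ₁ − θ₂ ≤ U_{1,n}(ω) − L_{2,n}(ω)}) ≥ 1 − α. Since the hypotheses concern only the marginal coverage of each interval, the bound holds under arbitrary dependence between the two sequences of intervals; applied to asymptotic interval endpoints it gives the asymptotic intersection method, and applied to bootstrap interval endpoints it gives the bootstrap intersection method. -/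

import Mathlib

open MeasureTheory Filter

theorem aux_eventually {Ω : Type*} [MeasurableSpace Ω] (P : Measure Ω) [IsProbabilityMeasure P]
    (A : ℕ → Set Ω) (a e : ℝ) (he : 0 < e)
    (h : ENNReal.ofReal a ≤ liminf (fun n => P (A n)) atTop) :
    ∀ᶠ n in atTop, a - e ≤ P.real (A n) := by
  by_cases ha : a ≤ 0
  · exact Eventually.of_forall fun n => by
      have : 0 ≤ P.real (A n) := measureReal_nonneg
      linarith
  · have hlt : ENNReal.ofReal (a - e) < ENNReal.ofReal a :=
      (ENNReal.ofReal_lt_ofReal_iff (by linarith)).2 (by linarith)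
    filter_upwards [eventually_lt_of_lt_liminf (hlt.trans_le h)] with n hn
    exact (ENNReal.ofReal_le_iff_le_toReal (measure_ne_top _ _)).1 hn.le

/-- Asymptotic intersection method, part (1): if the marginal
confidence intervals have asymptotic coverage (in the liminf sense) at least
`1 - α₁` and `1 - α₂`, and `α₁ + α₂ ≤ α`, then the intersection interval for the
difference has asymptotic coverage at least `1 - α`, under arbitrary dependence. -/
theorem asymptotic_intersection_method_part1
    {Ω : Type*} [MeasurableSpace Ω] (P : Measure Ω) [IsProbabilityMeasure P]
    (L₁ U₁ L₂ U₂ : ℕ → Ω → ℝ)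
    (hL₁ : ∀ n, Measurable (L₁ n)) (hU₁ : ∀ n, Measurable (U₁ n))
    (hL₂ : ∀ n, Measurable (L₂ n)) (hU₂ : ∀ n, Measurable (U₂ n))
    (θ₁ θ₂ α₁ α₂ α : ℝ)
    (hα₁ : α₁ ∈ Set.Icc (0 : ℝ) 1) (hα₂ : α₂ ∈ Set.Icc (0 : ℝ) 1)
    (hα : α ∈ Set.Icc (0 : ℝ) 1) (hsum : α₁ + α₂ ≤ α)
    (h₁ : ENNReal.ofReal (1 - α₁) ≤
      liminf (fun n => P {ω | L₁ n ω ≤ θ₁ ∧ θ₁ ≤ U₁ n ω}) atTop)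
    (h₂ : ENNReal.ofReal (1 - α₂) ≤
      liminf (fun n => P {ω | L₂ n ω ≤ θ₂ ∧ θ₂ ≤ U₂ n ω}) atTop) :
    ENNReal.ofReal (1 - α) ≤
      liminf (fun n =>
        P {ω | L₁ n ω - U₂ n ω ≤ θ₁ - θ₂ ∧ θ₁ - θ₂ ≤ U₁ n ω - L₂ n ω}) atTop := by
  refine ENNReal.le_of_forall_pos_le_add fun ε hε _ => ?_
  have he : (0 : ℝ) < ε / 2 := by positivity
  have key : ENNReal.ofReal (1 - α - ε) ≤ liminf (fun n =>
        P {ω | L₁ n ω - U₂ n ω ≤ θ₁ - θ₂ ∧ θ₁ - θ₂ ≤ U₁ n ω - L₂ n ω}) atTop := by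
    refine le_liminf_of_le (by isBoundedDefault) ?_
    filter_upwards [aux_eventually P _ _ _ he h₁, aux_eventually P _ _ _ he h₂] with n h1 h2
    refine ENNReal.ofReal_le_of_le_toReal ?_
    change _ ≤ P.real _
    set A := {ω | L₁ n ω ≤ θ₁ ∧ θ₁ ≤ U₁ n ω}
    set B := {ω | L₂ n ω ≤ θ₂ ∧ θ₂ ≤ U₂ n ω}
    have hB : MeasurableSet B :=
      (measurableSet_le (hL₂ n) measurable_const).inter (measurableSet_le measurable_const (hU₂ n))
    have h3 := measureReal_union_add_inter (μ := P) (s := A) hB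
    have h4 : P.real (A ∪ B) ≤ 1 := measureReal_le_one
    have h5 : P.real (A ∩ B) ≤ P.real {ω | L₁ n ω - U₂ n ω ≤ θ₁ - θ₂ ∧
        θ₁ - θ₂ ≤ U₁ n ω - L₂ n ω} := by
      refine measureReal_mono ?_
      rintro ω ⟨⟨a, b⟩, c, d⟩
      exact ⟨by linarith, by linarith⟩
    linarith
  calc ENNReal.ofReal (1 - α) = ENNReal.ofReal ((1 - α - ε) + ε) := by congr 1; ring
    _ ≤ ENNReal.ofReal (1 - α - ε) + ENNReal.ofReal ε := ENNReal.ofReal_add_le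
    _ ≤ _ := by
      rw [ENNReal.ofReal_coe_nnreal]
      gcongr
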